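/- arXiv:2203.07527 — 2 statements merged into one kernel-verified Lean document; each statement's English description precedes it below -/
import Mathlib

section
/- Let G be a differentiable σ_G-weakly convex function, let A and B be real matrices of compatible sizes, let c > 0, and let vectors p, q, q′, ν satisfy the first-order condition ∇G(q′) = Bᵀ[ν + c(A p − B q′)]. Then L_c(p, q, ν) − L_c(p, q′, ν) ≥ (c/2) ‖B q − B q′‖² − (σ_G/2) ‖q − q′‖². -/
open scoped RealInnerProductSpace

/-- The augmented Lagrangian
`L_c(p, q, ν) := F p + G q + ⟨ν, A p - B q⟩ + (c/2) ‖A p - B q‖²`. -/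
noncomputable def augLag {E E₂ H : Type*}
    [NormedAddCommGroup E] [InnerProductSpace ℝ E]
    [NormedAddCommGroup E₂] [InnerProductSpace ℝ E₂]
    [NormedAddCommGroup H] [InnerProductSpace ℝ H]
    (F : E → ℝ) (G : E₂ → ℝ) (A : E →L[ℝ] H) (B : E₂ →L[ℝ] H) (c : ℝ)
    (p : E) (q : E₂) (ν : H) : ℝ :=
  F p + G q + ⟪ν, A p - B q⟫ + c / 2 * ‖A p - B q‖ ^ 2

/-!
The coupling terms of `L_c` are quadratic in `q`, so they equal their second-order expansion at
`q'`, whose linear part is `-⟨ν + c (A p - B q'), B (q - q')⟩`. By the first-order condition this is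
`-⟨g, q - q'⟩` with `g` a subgradient of `G` at `q'`, and it cancels the linear term in the
subgradient inequality for `G`.
-/

section InnerProductSpace

variable {E E₂ H : Type*}
  [NormedAddCommGroup E] [InnerProductSpace ℝ E]
  [NormedAddCommGroup E₂] [InnerProductSpace ℝ E₂]
  [NormedAddCommGroup H] [InnerProductSpace ℝ H]

/-- `g` is a proximal subgradient of `G` at `x` with modulus `σ`. The inequality is required at
every `y`, not only near `x`, so that a differentiable `G` is `σ`-weakly convex exactly when its
gradient is such a subgradient at each point. -/
def IsProximalSubgradientAt (σ : ℝ) (G : E → ℝ) (g x : E) : Prop :=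
  ∀ y, G x + ⟪g, y - x⟫ - σ / 2 * ‖y - x‖ ^ 2 ≤ G y

theorem inner_sub_add_half_mul_norm_sub_sq (c : ℝ) (ν r d : H) :
    ⟪ν, r - d⟫ + c / 2 * ‖r - d‖ ^ 2 =
      ⟪ν, r⟫ + c / 2 * ‖r‖ ^ 2 - ⟪ν + c • r, d⟫ + c / 2 * ‖d‖ ^ 2 := by
  rw [inner_sub_right, norm_sub_sq_real, inner_add_left, real_inner_smul_left]
  ring

theorem augLag_sub_augLag (F : E → ℝ) (G : E₂ → ℝ) (A : E →L[ℝ] H) (B : E₂ →L[ℝ] H)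
    (c : ℝ) (p : E) (q q' : E₂) (ν : H) :
    augLag F G A B c p q ν - augLag F G A B c p q' ν =
      G q - G q' - ⟪ν + c • (A p - B q'), B (q - q')⟫ + c / 2 * ‖B q - B q'‖ ^ 2 := by
  have residual_eq : A p - B q = A p - B q' - B (q - q') := by
    rw [map_sub, sub_sub_sub_cancel_right]
  have expansion := inner_sub_add_half_mul_norm_sub_sq c ν (A p - B q') (B (q - q'))
  rw [← residual_eq] at expansion
  rw [augLag, augLag, ← map_sub]
  linarith

/-- `hstat` is the weak form of `g = Bᵀ (ν + c (A p - B q'))`. -/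
theorem augLag_decrease_q_update_general (F : E → ℝ) {G : E₂ → ℝ} {σ : ℝ}
    (A : E →L[ℝ] H) (B : E₂ →L[ℝ] H) (c : ℝ) (p : E) (q : E₂) {g q' : E₂} (ν : H)
    (hg : IsProximalSubgradientAt σ G g q')
    (hstat : ∀ v, ⟪g, v⟫ = ⟪ν + c • (A p - B q'), B v⟫) :
    c / 2 * ‖B q - B q'‖ ^ 2 - σ / 2 * ‖q - q'‖ ^ 2 ≤
      augLag F G A B c p q ν - augLag F G A B c p q' ν := by
  rw [augLag_sub_augLag, ← hstat]
  linarith [hg q]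

end InnerProductSpace

/-- Let `G` be a differentiable `σ_G`-weakly convex function, `A, B`
matrices (linear maps) of compatible sizes, `c > 0`, and suppose `p, q, q', ν` satisfy the
first-order condition `∇G(q') = Bᵀ (ν + c (A p - B q'))`. Then
`L_c(p, q, ν) - L_c(p, q', ν) ≥ (c/2) ‖B q - B q'‖² - (σ_G/2) ‖q - q'‖²`. -/
theorem augLag_decrease_q_update {E E₂ H : Type*}
    [NormedAddCommGroup E] [InnerProductSpace ℝ E]
    [NormedAddCommGroup E₂] [InnerProductSpace ℝ E₂] [CompleteSpace E₂]
    [NormedAddCommGroup H] [InnerProductSpace ℝ H]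
    (F : E → ℝ)
    (G : E₂ → ℝ) (gradG : E₂ → E₂) (hGdiff : ∀ x, HasGradientAt G (gradG x) x)
    (σG : ℝ)
    (hGwc : ∀ x y, G y ≥ G x + ⟪gradG x, y - x⟫ - σG / 2 * ‖y - x‖ ^ 2)
    (A : E →L[ℝ] H)
    (B : E₂ →L[ℝ] H) (Bt : H →L[ℝ] E₂)
    (hBt : ∀ (x : E₂) (ξ : H), ⟪B x, ξ⟫ = ⟪x, Bt ξ⟫)
    (c : ℝ) (hc : 0 < c) (p : E) (q q' : E₂) (ν : H)
    (hmin : gradG q' = Bt (ν + c • (A p - B q'))) :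
    augLag F G A B c p q ν - augLag F G A B c p q' ν ≥
      c / 2 * ‖B q - B q'‖ ^ 2 - σG / 2 * ‖q - q'‖ ^ 2 :=
  augLag_decrease_q_update_general F A B c p q ν (hGwc q') fun v => by
    rw [hmin, real_inner_comm, ← hBt, real_inner_comm]
end

section
/- Let F be differentiable and σ_F-strongly convex; let G be differentiable and ω_G-restricted weakly convex with respect to B; let A be an n×n symmetric positive definite matrix with smallest eigenvalue μ_A > 0 and largest eigenvalue λ_A; let c > 0. Let (p*, q*, ν*) be a stationary triple: A p* = B q*, ∇F(p*) = −Aᵀ ν*, ∇G(q*) = Bᵀ ν*. Let (p′, q′, ν′) satisfy ∇F(p′) = −Aᵀ ν′ and ∇G(q′) = Bᵀ[ν′ + c(A p′ − B q′)]. Then: (i) L_c(p′, q′, ν′) − L_c(p*, q*, ν*) ≤ ((c λ_A² − σ_F)/2) ‖p′ − p*‖² − ((c − ω_G)/2) ‖B q′ − B q*‖²; and (ii) ‖∇L_c(p′, q′, ν′)‖² ≥ (c² μ_A² + 1) ‖A p′ − B q′‖², where ∇L_c is the full gradient of L_c in (p, q, ν). -/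
open scoped RealInnerProductSpace

/-!
Put `a = A (p' - p)` and `b = B (q' - q)`, where `(p, q)` is feasible, so that the residual is
`r = A p' - B q' = a - b`. The convexity inequalities at `p'` and `q'` bound the objective gap by
`-⟪ν', a⟫ + ⟪ν' + c r, b⟫` plus curvature terms. Adding the Lagrangian terms
`⟪ν', r⟫ + (c/2) ‖r‖²` cancels `ν'` and leaves `c (⟪a - b, b⟫ + ‖a - b‖² / 2)`, which is
`(c/2) (‖a‖² - ‖b‖²)`. For the gradient bound, the optimality conditions reduce the gradient of
`L_c` to `(c Aᵀ r, 0, r)`.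
-/

lemma sq_mul_norm_sq_le_norm_neg_map_add_map_sq {V W : Type*}
    [SeminormedAddCommGroup V] [NormedSpace ℝ V] [SeminormedAddCommGroup W] [Module ℝ W]
    {T : W →ₗ[ℝ] V} {μ : ℝ} {r : W} (hμ : 0 ≤ μ) (hT : μ * ‖r‖ ≤ ‖T r‖) (c : ℝ) (ν : W) :
    c ^ 2 * μ ^ 2 * ‖r‖ ^ 2 ≤ ‖-T ν + T (ν + c • r)‖ ^ 2 := by
  have hgrad : -T ν + T (ν + c • r) = c • T r := by
    rw [map_add, map_smul, neg_add_cancel_left]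
  calc c ^ 2 * μ ^ 2 * ‖r‖ ^ 2 = c ^ 2 * (μ * ‖r‖) ^ 2 := by ring
    _ ≤ c ^ 2 * ‖T r‖ ^ 2 := by gcongr
    _ = ‖-T ν + T (ν + c • r)‖ ^ 2 := by
      rw [hgrad, norm_smul, mul_pow, Real.norm_eq_abs, sq_abs]

section InnerProductSpace

variable {X Y : Type*} [SeminormedAddCommGroup X] [InnerProductSpace ℝ X]
  [SeminormedAddCommGroup Y] [InnerProductSpace ℝ Y]

lemma inner_sub_right_self_add_half_norm_sub_sq (a b : X) :
    ⟪a - b, b⟫ + ‖a - b‖ ^ 2 / 2 = (‖a‖ ^ 2 - ‖b‖ ^ 2) / 2 := by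
  rw [inner_sub_left, real_inner_self_eq_norm_sq, norm_sub_sq_real]
  ring

lemma mul_norm_le_norm_of_mul_norm_sq_le_inner {μ : ℝ} {x y : X} (h : μ * ‖x‖ ^ 2 ≤ ⟪y, x⟫) :
    μ * ‖x‖ ≤ ‖y‖ := by
  rcases (norm_nonneg x).eq_or_lt with hx | hx
  · simp [← hx]
  · refine le_of_mul_le_mul_right ?_ hx
    calc μ * ‖x‖ * ‖x‖ = μ * ‖x‖ ^ 2 := by ring
      _ ≤ ⟪y, x⟫ := h
      _ ≤ ‖y‖ * ‖x‖ := real_inner_le_norm y x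

lemma sub_le_inner_sub_of_adjoint_subgradient {T : X →ₗ[ℝ] Y} {Tt : Y → X}
    (hT : ∀ x η, ⟪T x, η⟫ = ⟪x, Tt η⟫) {f : X → ℝ} {x y : X} {η : Y} {m : ℝ}
    (hf : f x + ⟪Tt η, y - x⟫ + m ≤ f y) :
    f x - f y ≤ ⟪η, T x - T y⟫ - m := by
  have hadj : ⟪Tt η, y - x⟫ = -⟪η, T x - T y⟫ := by
    rw [real_inner_comm, ← hT, real_inner_comm, map_sub, ← inner_neg_right, neg_sub]
  linarith

end InnerProductSpace

section AugmentedLagrangian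

variable {E E₂ H : Type*} [NormedAddCommGroup E] [InnerProductSpace ℝ E]
  [NormedAddCommGroup E₂] [InnerProductSpace ℝ E₂]
  [NormedAddCommGroup H] [InnerProductSpace ℝ H]
  {F : E → ℝ} {G : E₂ → ℝ} {A : E →L[ℝ] H} {At : H →L[ℝ] E} {B : E₂ →L[ℝ] H} {Bt : H →L[ℝ] E₂}
  {c : ℝ} {p p' : E} {q q' : E₂} {ν ν' : H}

lemma augLag_of_feasible (h : A p = B q) : augLag F G A B c p q ν = F p + G q := by
  simp [augLag, h]

lemma augLag_sub_le_of_objective_gap_le {s t : ℝ} (hfeas : A p = B q)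
    (hF : F p' - F p ≤ ⟪-ν', A p' - A p⟫ + s)
    (hG : G q' - G q ≤ ⟪ν' + c • (A p' - B q'), B q' - B q⟫ + t) :
    augLag F G A B c p' q' ν' - augLag F G A B c p q ν ≤
      c / 2 * (‖A p' - A p‖ ^ 2 - ‖B q' - B q‖ ^ 2) + s + t := by
  have hres : A p' - B q' = (A p' - A p) - (B q' - B q) := by rw [hfeas]; abel
  rw [augLag_of_feasible hfeas, augLag, hres]
  rw [hres] at hG
  generalize A p' - A p = a at *
  generalize B q' - B q = b at *
  have hpolar := inner_sub_right_self_add_half_norm_sub_sq a b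
  calc F p' + G q' + ⟪ν', a - b⟫ + c / 2 * ‖a - b‖ ^ 2 - (F p + G q)
      = (F p' - F p) + (G q' - G q) + ⟪ν', a - b⟫ + c / 2 * ‖a - b‖ ^ 2 := by ring
    _ ≤ (⟪-ν', a⟫ + s) + (⟪ν' + c • (a - b), b⟫ + t) + ⟪ν', a - b⟫ + c / 2 * ‖a - b‖ ^ 2 := by
      gcongr
    _ = c * (⟪a - b, b⟫ + ‖a - b‖ ^ 2 / 2) + s + t := by
      rw [inner_neg_left, inner_add_left, real_inner_smul_left, inner_sub_right]
      ring
    _ = c / 2 * (‖a‖ ^ 2 - ‖b‖ ^ 2) + s + t := by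
      rw [hpolar]
      ring

lemma augLag_sub_le_of_adjoint_subgradient {σ ω : ℝ}
    (hAt : ∀ x ξ, ⟪A x, ξ⟫ = ⟪x, At ξ⟫) (hBt : ∀ x ξ, ⟪B x, ξ⟫ = ⟪x, Bt ξ⟫)
    (hfeas : A p = B q)
    (hF : F p ≥ F p' + ⟪-At ν', p - p'⟫ + σ / 2 * ‖p - p'‖ ^ 2)
    (hG : G q ≥ G q' + ⟪Bt (ν' + c • (A p' - B q')), q - q'⟫ - ω / 2 * ‖B q - B q'‖ ^ 2) :
    augLag F G A B c p' q' ν' - augLag F G A B c p q ν ≤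
      c / 2 * ‖A p' - A p‖ ^ 2 - σ / 2 * ‖p' - p‖ ^ 2 - (c - ω) / 2 * ‖B q' - B q‖ ^ 2 := by
  rw [← map_neg, norm_sub_rev] at hF
  rw [norm_sub_rev (B q), sub_eq_add_neg] at hG
  have hFgap := sub_le_inner_sub_of_adjoint_subgradient (T := A.toLinearMap) hAt hF
  have hGgap := sub_le_inner_sub_of_adjoint_subgradient (T := B.toLinearMap) hBt hG
  rw [sub_eq_add_neg] at hFgap hGgap
  have hgap := augLag_sub_le_of_objective_gap_le (ν := ν) hfeas hFgap hGgap
  linarith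

end AugmentedLagrangian

/-- `gF` and `gG` play the roles of `∇F(p')` and `∇G(q')`: they are subgradients up to a quadratic
curvature term. -/
theorem augLag_value_gap_and_gradient_bound_first_general {E E₂ H : Type*}
    [NormedAddCommGroup E] [InnerProductSpace ℝ E]
    [NormedAddCommGroup E₂] [InnerProductSpace ℝ E₂]
    [NormedAddCommGroup H] [InnerProductSpace ℝ H]
    {F : E → ℝ} {G : E₂ → ℝ} {A : E →L[ℝ] H} {At : H →L[ℝ] E} {B : E₂ →L[ℝ] H} {Bt : H →L[ℝ] E₂}
    (hAt : ∀ x ξ, ⟪A x, ξ⟫ = ⟪x, At ξ⟫) (hBt : ∀ x ξ, ⟪B x, ξ⟫ = ⟪x, Bt ξ⟫)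
    {σ ω μ lam c : ℝ} {p p' gF : E} {q q' gG : E₂} {ν ν' : H}
    (hF : ∀ x, F x ≥ F p' + ⟪gF, x - p'⟫ + σ / 2 * ‖x - p'‖ ^ 2)
    (hG : ∀ y, G y ≥ G q' + ⟪gG, y - q'⟫ - ω / 2 * ‖B y - B q'‖ ^ 2)
    (hμ : 0 ≤ μ) (hAt_lb : ∀ ξ, μ * ‖ξ‖ ≤ ‖At ξ‖) (hA_ub : ∀ x, ‖A x‖ ≤ lam * ‖x‖) (hc : 0 ≤ c)
    (hfeas : A p = B q) (hgF : gF = -At ν') (hgG : gG = Bt (ν' + c • (A p' - B q'))) :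
    (augLag F G A B c p' q' ν' - augLag F G A B c p q ν ≤
        ((c * lam ^ 2 - σ) / 2) * ‖p' - p‖ ^ 2 - ((c - ω) / 2) * ‖B q' - B q‖ ^ 2) ∧
    (‖gF + At (ν' + c • (A p' - B q'))‖ ^ 2
        + ‖gG - Bt (ν' + c • (A p' - B q'))‖ ^ 2
        + ‖A p' - B q'‖ ^ 2 ≥
      (c ^ 2 * μ ^ 2 + 1) * ‖A p' - B q'‖ ^ 2) := by
  subst hgF hgG
  have hgrad := sq_mul_norm_sq_le_norm_neg_map_add_map_sq (T := At.toLinearMap)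
    hμ (hAt_lb (A p' - B q')) c ν'
  refine ⟨?_, by simpa [add_mul] using hgrad⟩
  have hA : ‖A p' - A p‖ ≤ lam * ‖p' - p‖ := by simpa only [map_sub] using hA_ub (p' - p)
  calc augLag F G A B c p' q' ν' - augLag F G A B c p q ν
      ≤ c / 2 * ‖A p' - A p‖ ^ 2 - σ / 2 * ‖p' - p‖ ^ 2 - (c - ω) / 2 * ‖B q' - B q‖ ^ 2 :=
        augLag_sub_le_of_adjoint_subgradient hAt hBt hfeas (hF p) (hG q)
    _ ≤ c / 2 * (lam * ‖p' - p‖) ^ 2 - σ / 2 * ‖p' - p‖ ^ 2 - (c - ω) / 2 * ‖B q' - B q‖ ^ 2 := by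
      gcongr
    _ = ((c * lam ^ 2 - σ) / 2) * ‖p' - p‖ ^ 2 - ((c - ω) / 2) * ‖B q' - B q‖ ^ 2 := by ring

/-- Let `F` be differentiable and `σ_F`-strongly convex; `G`
differentiable and `ω_G`-restricted weakly convex w.r.t. `B`; `A` symmetric positive
definite with smallest eigenvalue `μ_A > 0` and largest eigenvalue `λ_A`; `c > 0`.
Let `(p*, q*, ν*)` be stationary (`A p* = B q*`, `∇F(p*) = -Aᵀ ν*`, `∇G(q*) = Bᵀ ν*`)
and let `(p', q', ν')` satisfy `∇F(p') = -Aᵀ ν'` and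
`∇G(q') = Bᵀ[ν' + c (A p' - B q')]`. Then
(i) `L_c(p', q', ν') - L_c(p*, q*, ν*) ≤ ((c λ_A² - σ_F)/2) ‖p' - p*‖²
      - ((c - ω_G)/2) ‖B q' - B q*‖²`, and
(ii) `‖∇L_c(p', q', ν')‖² ≥ (c² μ_A² + 1) ‖A p' - B q'‖²`, where the full gradient of
`L_c` in `(p, q, ν)` has components `∇F(p') + Aᵀ[ν' + c (A p' - B q')]`,
`∇G(q') - Bᵀ[ν' + c (A p' - B q')]`, and `A p' - B q'`. -/
theorem augLag_value_gap_and_gradient_bound_first {E E₂ : Type*}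
    [NormedAddCommGroup E] [InnerProductSpace ℝ E] [CompleteSpace E]
    [NormedAddCommGroup E₂] [InnerProductSpace ℝ E₂] [CompleteSpace E₂]
    (F : E → ℝ) (gradF : E → E) (hFdiff : ∀ x, HasGradientAt F (gradF x) x)
    (σF : ℝ) (hσF : 0 < σF)
    (hFsc : ∀ x y, F y ≥ F x + ⟪gradF x, y - x⟫ + σF / 2 * ‖y - x‖ ^ 2)
    (G : E₂ → ℝ) (gradG : E₂ → E₂) (hGdiff : ∀ x, HasGradientAt G (gradG x) x)
    (ωG : ℝ)
    (B : E₂ →L[ℝ] E) (Bt : E →L[ℝ] E₂)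
    (hBt : ∀ (x : E₂) (ξ : E), ⟪B x, ξ⟫ = ⟪x, Bt ξ⟫)
    (hGrwc : ∀ x y, G y ≥ G x + ⟪gradG x, y - x⟫ - ωG / 2 * ‖B y - B x‖ ^ 2)
    (A : E →L[ℝ] E) (hAsym : ∀ x y, ⟪A x, y⟫ = ⟪x, A y⟫)
    (μA lamA : ℝ) (hμA : 0 < μA)
    (hAlb : ∀ x, μA * ‖x‖ ^ 2 ≤ ⟪A x, x⟫) (hAub : ∀ x, ‖A x‖ ≤ lamA * ‖x‖)
    (c : ℝ) (hc : 0 < c)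
    (pstar : E) (qstar : E₂) (νstar : E)
    (hsta1 : A pstar = B qstar)
    (hsta2 : gradF pstar = -(A νstar))
    (hsta3 : gradG qstar = Bt νstar)
    (p' : E) (q' : E₂) (ν' : E)
    (hp' : gradF p' = -(A ν'))
    (hq' : gradG q' = Bt (ν' + c • (A p' - B q'))) :
    (augLag F G A B c p' q' ν' - augLag F G A B c pstar qstar νstar ≤
        ((c * lamA ^ 2 - σF) / 2) * ‖p' - pstar‖ ^ 2
        - ((c - ωG) / 2) * ‖B q' - B qstar‖ ^ 2) ∧
    (‖gradF p' + A (ν' + c • (A p' - B q'))‖ ^ 2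
        + ‖gradG q' - Bt (ν' + c • (A p' - B q'))‖ ^ 2
        + ‖A p' - B q'‖ ^ 2 ≥
      (c ^ 2 * μA ^ 2 + 1) * ‖A p' - B q'‖ ^ 2) := by
  exact augLag_value_gap_and_gradient_bound_first_general hAsym hBt (hFsc p') (hGrwc q') hμA.le
    (fun ξ => mul_norm_le_norm_of_mul_norm_sq_le_inner (hAlb ξ)) hAub hc.le hsta1 hp' hq'
end
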